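/- arXiv:math/0610188 — 5 statements merged into one kernel-verified Lean document; each statement's English description precedes it below -/
import Mathlib

section
/- Let G = (V,E) be a triangle-free graph on n vertices with maximum degree Δ, let 0 < β ≤ 1 and k ≥ Δ + 2/β. Let X be a uniformly random proper k-coloring of G. Then Pr(∃ v ∈ V with |A(X,v)| < k·(e^{−Δ/k} − β)) ≤ n·e^{−β²k/8}. -/
/-!
Fix a vertex `v` and condition on the colors outside `N(v)`. Since `N(v)` is independent, the colors
of the neighbors `w` of `v` become independent, each uniform on its own list of available colors,
whose size is at least `k - Δ`. On this product space a color `c` is missed with probability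
`∏ (1 - 1 / |list of w|)`, the product ranging over the lists which contain `c`. Each list
contributes a total weight close to `1` over all colors, so convexity of `exp` makes the expected
number of missed colors at least about `k e^{-Δ/k}`. Changing one neighbor changes this
number by at most `1`, so McDiarmid's inequality bounds the deviation; a union bound over `v`
finishes the proof.
-/

section BoundedDifferences

open Finset Function
open scoped BigOperators

theorem exp_expect_le_expect_exp {ι : Type*} {s : Finset ι} (hs : s.Nonempty) (x : ι → ℝ) :
    Real.exp (𝔼 i ∈ s, x i) ≤ 𝔼 i ∈ s, Real.exp (x i) := by
  have hcard : (#s : ℝ) ≠ 0 := by exact_mod_cast hs.card_ne_zero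
  have hJensen := convexOn_exp.map_sum_le (t := s) (w := fun _ => (#s : ℝ)⁻¹) (p := x)
    (fun _ _ => by positivity) (by simp [hcard]) (fun _ _ => Set.mem_univ _)
  simpa only [smul_eq_mul, ← mul_sum, expect_eq_sum_div_card, div_eq_inv_mul] using hJensen

theorem expect_exp_mul_le {ι : Type*} {s : Finset ι} (hs : s.Nonempty) {x : ι → ℝ} {r : ℝ}
    (hx : ∀ i ∈ s, ∀ j ∈ s, x i - x j ≤ r) (y : ℝ) :
    𝔼 i ∈ s, Real.exp (y * x i) ≤ Real.exp (r ^ 2 * y ^ 2 / 8) * Real.exp (y * 𝔼 i ∈ s, x i) := by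
  let _ : MeasurableSpace s := ⊤
  have : Nonempty s := hs.to_subtype
  let μ := (PMF.uniformOfFintype s).toMeasure
  have integral_eq (g : ι → ℝ) : ∫ i : s, g i ∂μ = 𝔼 i ∈ s, g i := by
    rw [PMF.integral_eq_sum, expect_eq_sum_div_card, ← s.sum_coe_sort g, sum_div]
    simp [div_eq_inv_mul]
  obtain ⟨i₀, hi₀, hmin⟩ := s.exists_min_image x hs
  have hmem : ∀ i : s, x i ∈ Set.Icc (x i₀) (x i₀ + r) := fun i =>
    ⟨hmin i i.2, by linarith [hx i i.2 i₀ hi₀]⟩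
  have hmgf := (ProbabilityTheory.hasSubgaussianMGF_of_mem_Icc (μ := μ) (X := fun i : s => x i)
    (measurable_from_top.aemeasurable) (.of_forall hmem)).mgf_le y
  rw [ProbabilityTheory.mgf, integral_eq, integral_eq fun i => Real.exp (y * (x i - _))] at hmgf
  calc 𝔼 i ∈ s, Real.exp (y * x i)
      = (𝔼 i ∈ s, Real.exp (y * (x i - 𝔼 j ∈ s, x j))) * Real.exp (y * 𝔼 i ∈ s, x i) := by
        rw [expect_mul]
        exact expect_congr rfl fun i _ => by rw [← Real.exp_add]; ring_nf
    _ ≤ _ := by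
        gcongr
        refine hmgf.trans_eq (congrArg Real.exp ?_)
        simp only [add_sub_cancel_left, NNReal.coe_pow, NNReal.coe_div, coe_nnnorm,
          Real.norm_eq_abs, NNReal.coe_ofNat, div_pow, sq_abs]
        ring

variable {ι : Type*} [DecidableEq ι]

theorem dependsOn_expect_update {α : ι → Type*} {f : (∀ i, α i) → ℝ} {J : Finset ι}
    (hf : DependsOn f J) (i : ι) (s : Finset (α i)) :
    DependsOn (fun x => 𝔼 a ∈ s, f (update x i a)) (J.erase i) :=
  fun _ _ hxy => expect_congr rfl fun a _ => hf.update i a hxy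

variable [Fintype ι]

theorem expect_piFinset_prod_univ {α : ι → Type*} (t : ∀ i, Finset (α i)) (g : ∀ i, α i → ℝ) :
    𝔼 x ∈ Fintype.piFinset t, ∏ i, g i (x i) = ∏ i, 𝔼 a ∈ t i, g i a := by
  simp only [expect_eq_sum_div_card, prod_div_distrib, prod_univ_sum, Fintype.card_piFinset,
    Nat.cast_prod]

variable {α : ι → Type*} {t : ∀ i, Finset (α i)}

theorem expect_piFinset_prod (ht : ∀ i, (t i).Nonempty) (J : Finset ι) (g : ∀ i, α i → ℝ) :
    𝔼 x ∈ Fintype.piFinset t, ∏ i ∈ J, g i (x i) = ∏ i ∈ J, 𝔼 a ∈ t i, g i a := by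
  have hext : ∀ x : ∀ i, α i, ∏ i ∈ J, g i (x i) = ∏ i, if i ∈ J then g i (x i) else 1 :=
    fun x => by rw [prod_ite_mem, univ_inter]
  simp only [hext]
  rw [expect_piFinset_prod_univ t fun i a => if i ∈ J then g i a else 1,
    ← prod_subset J.subset_univ]
  · exact prod_congr rfl fun i hi => by simp only [hi, if_true]
  · exact fun i _ hi => by simp only [hi, if_false, expect_const (ht i)]

theorem update_mem_piFinset {x : ∀ i, α i} (hx : x ∈ Fintype.piFinset t) {i : ι} {a : α i}
    (ha : a ∈ t i) : update x i a ∈ Fintype.piFinset t := by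
  rw [Fintype.mem_piFinset] at hx ⊢
  intro j
  obtain rfl | hji := eq_or_ne j i
  · rwa [update_self]
  · rw [update_of_ne hji]
    exact hx j

theorem expect_piFinset_expect_update {i : ι} (hi : (t i).Nonempty) (f : (∀ i, α i) → ℝ) :
    𝔼 x ∈ Fintype.piFinset t, 𝔼 a ∈ t i, f (update x i a) = 𝔼 x ∈ Fintype.piFinset t, f x := by
  let swap : (∀ i, α i) × α i → (∀ i, α i) × α i := fun p => (update p.1 i p.2, p.1 i)
  have hswap : ∀ p ∈ Fintype.piFinset t ×ˢ t i, swap p ∈ Fintype.piFinset t ×ˢ t i :=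
    fun p hp => by
      rw [mem_product] at hp
      exact mem_product.2 ⟨update_mem_piFinset hp.1 hp.2, Fintype.mem_piFinset.1 hp.1 i⟩
  have hinvol : ∀ p, swap (swap p) = p := fun p => by
    simp only [swap, update_idem, update_self, update_eq_self]
  rw [← expect_product' (Fintype.piFinset t) (t i) fun x a => f (update x i a)]
  calc 𝔼 p ∈ Fintype.piFinset t ×ˢ t i, f (swap p).1
      = 𝔼 p ∈ Fintype.piFinset t ×ˢ t i, f p.1 :=
        expect_nbij' swap swap hswap hswap (fun p _ => hinvol p) (fun p _ => hinvol p)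
          fun _ _ => rfl
    _ = 𝔼 x ∈ Fintype.piFinset t, f x := by
        rw [expect_product]
        exact expect_congr rfl fun x _ => expect_const hi (f x)

theorem abs_expect_update_sub_le {f : (∀ i, α i) → ℝ} {i j : ι} (hj : (t j).Nonempty) {r : ℝ}
    (hf : ∀ x ∈ Fintype.piFinset t, ∀ a ∈ t i, |f (update x i a) - f x| ≤ r) (hij : i ≠ j)
    {x : ∀ i, α i} (hx : x ∈ Fintype.piFinset t) {a : α i} (ha : a ∈ t i) :
    |𝔼 b ∈ t j, f (update (update x i a) j b) - 𝔼 b ∈ t j, f (update x j b)| ≤ r := by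
  rw [← expect_sub_distrib]
  refine (abs_expect_le _ _).trans (expect_le hj fun b hb => ?_)
  rw [update_comm hij]
  exact hf _ (update_mem_piFinset hx hb) a ha

theorem expect_piFinset_exp_mul_le (ht : ∀ i, (t i).Nonempty) (J : Finset ι) {f : (∀ i, α i) → ℝ}
    (hdep : DependsOn f J) {r : ι → ℝ}
    (hf : ∀ i ∈ J, ∀ x ∈ Fintype.piFinset t, ∀ a ∈ t i, |f (update x i a) - f x| ≤ r i) (y : ℝ) :
    𝔼 x ∈ Fintype.piFinset t, Real.exp (y * f x) ≤
      Real.exp ((∑ i ∈ J, r i ^ 2) * y ^ 2 / 8) *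
        Real.exp (y * 𝔼 x ∈ Fintype.piFinset t, f x) := by
  have hne : (Fintype.piFinset t).Nonempty := Fintype.piFinset_nonempty.2 ht
  induction J using Finset.induction_on generalizing f with
  | empty =>
    have ⟨x₀, _⟩ := hne
    have hconst : ∀ x, f x = f x₀ := fun x => hdep fun _ h => absurd h (by simp)
    simp only [hconst, expect_const hne, sum_empty, zero_mul, zero_div, Real.exp_zero, one_mul,
      le_refl]
  | insert i J hiJ ih =>
    let F : (∀ i, α i) → ℝ := fun x => 𝔼 a ∈ t i, f (update x i a)
    have hslice : ∀ x ∈ Fintype.piFinset t, 𝔼 a ∈ t i, Real.exp (y * f (update x i a)) ≤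
        Real.exp (r i ^ 2 * y ^ 2 / 8) * Real.exp (y * F x) := fun x hx => by
      refine expect_exp_mul_le (ht i) (fun a ha b hb => (le_abs_self _).trans ?_) y
      simpa only [update_idem] using
        hf i (mem_insert_self i J) _ (update_mem_piFinset hx hb) a ha
    have hF : 𝔼 x ∈ Fintype.piFinset t, Real.exp (y * F x) ≤ _ :=
      ih (by simpa only [erase_insert hiJ] using dependsOn_expect_update hdep i (t i))
        fun j hj x hx a ha =>
        abs_expect_update_sub_le (ht i) (hf j (mem_insert_of_mem hj))
          (ne_of_mem_of_not_mem hj hiJ) hx ha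
    calc 𝔼 x ∈ Fintype.piFinset t, Real.exp (y * f x)
        = 𝔼 x ∈ Fintype.piFinset t, 𝔼 a ∈ t i, Real.exp (y * f (update x i a)) :=
          (expect_piFinset_expect_update (ht i) fun x => Real.exp (y * f x)).symm
      _ ≤ Real.exp (r i ^ 2 * y ^ 2 / 8) * 𝔼 x ∈ Fintype.piFinset t, Real.exp (y * F x) := by
          rw [mul_expect]
          exact expect_le_expect hslice
      _ ≤ _ := by
          grw [hF]
          rw [expect_piFinset_expect_update (ht i), sum_insert hiJ, ← mul_assoc, ← Real.exp_add,
            ← add_div, ← add_mul]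

theorem card_filter_le_mul_exp_le {β : Type*} {s : Finset β} {f : β → ℝ} (T : ℝ)
    {y : ℝ} (hy : 0 ≤ y) :
    (#{x ∈ s | f x ≤ T} : ℝ) * Real.exp (-y * T) ≤ #s * 𝔼 x ∈ s, Real.exp (-y * f x) := by
  rw [card_mul_expect, ← nsmul_eq_mul]
  calc _ ≤ ∑ x ∈ s with f x ≤ T, Real.exp (-y * f x) :=
        card_nsmul_le_sum _ _ _ fun x hx => Real.exp_le_exp.2 <|
          mul_le_mul_of_nonpos_left (mem_filter.1 hx).2 (neg_nonpos.2 hy)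
    _ ≤ _ := sum_le_sum_of_subset_of_nonneg (filter_subset _ _) fun _ _ _ => (Real.exp_pos _).le

theorem card_filter_piFinset_le_expect_sub_le (ht : ∀ i, (t i).Nonempty) {J : Finset ι}
    {f : (∀ i, α i) → ℝ} (hdep : DependsOn f J) {r : ι → ℝ}
    (hf : ∀ i ∈ J, ∀ x ∈ Fintype.piFinset t, ∀ a ∈ t i, |f (update x i a) - f x| ≤ r i)
    {D : ℝ} (hD : 0 < D) (hrD : ∑ i ∈ J, r i ^ 2 ≤ D) {u : ℝ} (hu : 0 ≤ u) :
    (#{x ∈ Fintype.piFinset t | f x ≤ 𝔼 z ∈ Fintype.piFinset t, f z - u} : ℝ) ≤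
      Real.exp (-2 * u ^ 2 / D) * #(Fintype.piFinset t) := by
  set m := 𝔼 z ∈ Fintype.piFinset t, f z
  -- `y = 4u/D` minimizes the exponent `D y² / 8 - y u`.
  set y := 4 * u / D with hy
  have hmgf := expect_piFinset_exp_mul_le ht J hdep hf (-y)
  have hchernoff := card_filter_le_mul_exp_le (s := Fintype.piFinset t) (f := f) (m - u)
    (by positivity : 0 ≤ y)
  refine le_of_mul_le_mul_right (hchernoff.trans ?_) (Real.exp_pos (-y * (m - u)))
  calc #(Fintype.piFinset t) * 𝔼 x ∈ Fintype.piFinset t, Real.exp (-y * f x)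
      ≤ #(Fintype.piFinset t) * (Real.exp (D * (-y) ^ 2 / 8) * Real.exp (-y * m)) := by
        grw [hmgf, hrD]
    _ = Real.exp (-2 * u ^ 2 / D) * #(Fintype.piFinset t) * Real.exp (-y * (m - u)) := by
        have hexponent : D * (-y) ^ 2 / 8 + -y * m = -2 * u ^ 2 / D + -y * (m - u) := by
          rw [hy]
          field_simp
          ring
        rw [← Real.exp_add, hexponent, Real.exp_add]
        ring

end BoundedDifferences

section Occupancy

open Finset Function
open scoped BigOperators

theorem exp_neg_sub_half_le (u : ℝ) {δ : ℝ} (hδ : 0 ≤ δ) :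
    Real.exp (-u) - δ / 2 ≤ Real.exp (-(u * (1 + δ))) :=
  calc Real.exp (-u) - δ / 2
      ≤ Real.exp (-u) - δ * (u * Real.exp (-u)) := by
        nlinarith [Real.mul_exp_neg_le_exp_neg_one u, Real.exp_neg_one_lt_half]
    _ = Real.exp (-u) * (-(u * δ) + 1) := by ring
    _ ≤ Real.exp (-u) * Real.exp (-(u * δ)) := by
        gcongr
        exact Real.add_one_le_exp _
    _ = Real.exp (-(u * (1 + δ))) := by
        rw [← Real.exp_add]
        ring_nf

theorem exp_neg_inv_sub_one_le {x : ℝ} (hx : 1 < x) : Real.exp (-(x - 1)⁻¹) ≤ 1 - x⁻¹ := by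
  have hx1 : 0 < x - 1 := sub_pos.2 hx
  have hinv : 1 - x⁻¹ = ((x - 1)⁻¹ + 1)⁻¹ := by field_simp; ring
  rw [Real.exp_neg, hinv]
  gcongr
  exact Real.add_one_le_exp _

variable {C : Type*} [DecidableEq C]

theorem exp_neg_le_expect_ite_ne {s : Finset C} (hs : 1 < (#s : ℝ)) (c : C) :
    Real.exp (-if c ∈ s then (#s - 1 : ℝ)⁻¹ else 0) ≤ 𝔼 a ∈ s, if a ≠ c then (1 : ℝ) else 0 := by
  have hcard : (#s : ℝ) ≠ 0 := by positivity
  have hcompl : ∀ a, (if a ≠ c then (1 : ℝ) else 0) = 1 - if a = c then 1 else 0 := fun a => by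
    split_ifs <;> simp_all
  have hexpect : (𝔼 a ∈ s, if a ≠ c then (1 : ℝ) else 0) = 1 - if c ∈ s then (#s : ℝ)⁻¹ else 0 := by
    simp only [hcompl, expect_eq_sum_div_card, sum_sub_distrib, sum_const, nsmul_eq_mul, mul_one,
      sum_ite_eq', sub_div, div_self hcard, ite_div, one_div, zero_div]
  rw [hexpect]
  split_ifs
  · exact exp_neg_inv_sub_one_le hs
  · simp

variable [Fintype C] {V : Type*}

theorem sum_ite_mem_inv_card_sub_one_le {s : Finset C} {δ : ℝ} (hδ : 0 < δ)
    (hs : δ⁻¹ + 1 ≤ #s) : (∑ c, if c ∈ s then (#s - 1 : ℝ)⁻¹ else 0) ≤ 1 + δ := by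
  have hpred : δ⁻¹ ≤ #s - 1 := by linarith
  have hpos : (0 : ℝ) < #s - 1 := (inv_pos.2 hδ).trans_le hpred
  rw [sum_ite_mem, univ_inter, sum_const, nsmul_eq_mul]
  calc (#s : ℝ) * (#s - 1 : ℝ)⁻¹ = 1 + (#s - 1 : ℝ)⁻¹ := by field_simp; ring
    _ ≤ 1 + δ := by
      gcongr
      exact inv_le_of_inv_le₀ hδ hpred

theorem exp_neg_card_div_card_le_expect_prod [Nonempty C] {S : Finset V} {t : V → Finset C} {δ : ℝ}
    (hδ : 0 < δ) (ht : ∀ w ∈ S, δ⁻¹ + 1 ≤ #(t w)) :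
    Real.exp (-(#S / Fintype.card C * (1 + δ))) ≤
      𝔼 c, ∏ w ∈ S, 𝔼 a ∈ t w, if a ≠ c then (1 : ℝ) else 0 := by
  let weight : V → C → ℝ := fun w c => if c ∈ t w then (#(t w) - 1 : ℝ)⁻¹ else 0
  have hweight : ∑ c, ∑ w ∈ S, weight w c ≤ #S * (1 + δ) := by
    rw [sum_comm, ← nsmul_eq_mul]
    exact sum_le_card_nsmul _ _ _ fun w hw => sum_ite_mem_inv_card_sub_one_le hδ (ht w hw)
  calc Real.exp (-(#S / Fintype.card C * (1 + δ)))
      ≤ Real.exp (𝔼 c, ∑ w ∈ S, -weight w c) := by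
        simp only [sum_neg_distrib, expect_neg_distrib, Fintype.expect_eq_sum_div_card]
        rw [div_mul_eq_mul_div]
        gcongr
    _ ≤ 𝔼 c, Real.exp (∑ w ∈ S, -weight w c) := exp_expect_le_expect_exp univ_nonempty _
    _ ≤ 𝔼 c, ∏ w ∈ S, 𝔼 a ∈ t w, if a ≠ c then (1 : ℝ) else 0 := by
        simp only [Real.exp_sum]
        gcongr with c _ w hw
        exact exp_neg_le_expect_ite_ne (by linarith [ht w hw, inv_pos.2 hδ]) c

/-- The colors missed by `X` on `S`: in terms of balls thrown into bins, the empty bins. In the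
application `S` is the neighborhood of a vertex. -/
def unusedColors (S : Finset V) (X : V → C) : Finset C := {c | ∀ w ∈ S, X w ≠ c}

theorem mem_unusedColors {S : Finset V} {X : V → C} {c : C} :
    c ∈ unusedColors S X ↔ ∀ w ∈ S, X w ≠ c := by
  simp [unusedColors]

theorem card_le_card_unusedColors_add_card (S : Finset V) (X : V → C) :
    Fintype.card C ≤ #(unusedColors S X) + #S := by
  have hcompl : unusedColors S X = (S.image X)ᶜ := by
    ext c
    simp [mem_unusedColors]
  rw [hcompl, ← card_compl_add_card (S.image X)]
  gcongr
  exact card_image_le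

theorem dependsOn_unusedColors (S : Finset V) :
    DependsOn (unusedColors S : (V → C) → Finset C) S := fun X Y hXY => by
  ext c
  simp only [mem_unusedColors]
  exact forall₂_congr fun w hw => by rw [hXY w hw]

variable [DecidableEq V]

theorem card_unusedColors_le_card_unusedColors_update_add_one (S : Finset V) (X : V → C) (w : V)
    (c : C) : #(unusedColors S X) ≤ #(unusedColors S (update X w c)) + 1 := by
  have hsub : unusedColors S X ⊆ insert c (unusedColors S (update X w c)) := fun d hd => by
    rw [mem_unusedColors] at hd
    rw [mem_insert, or_iff_not_imp_left, mem_unusedColors]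
    intro hdc u hu
    obtain rfl | huw := eq_or_ne u w
    · rw [update_self]
      exact Ne.symm hdc
    · rw [update_of_ne huw]
      exact hd u hu
  exact (card_le_card hsub).trans (card_insert_le _ _)

theorem abs_card_unusedColors_update_sub_le (S : Finset V) (X : V → C) (w : V) (c : C) :
    |(#(unusedColors S (update X w c)) : ℝ) - #(unusedColors S X)| ≤ 1 := by
  have hle := card_unusedColors_le_card_unusedColors_update_add_one S X w c
  have hge := card_unusedColors_le_card_unusedColors_update_add_one S (update X w c) w (X w)
  rw [update_idem, update_eq_self] at hge
  rify at hle hge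
  rw [abs_le]
  constructor <;> linarith

variable [Fintype V]

theorem expect_card_unusedColors {t : V → Finset C} (ht : ∀ w, (t w).Nonempty) (S : Finset V) :
    𝔼 Y ∈ Fintype.piFinset t, (#(unusedColors S Y) : ℝ) =
      Fintype.card C * 𝔼 c, ∏ w ∈ S, 𝔼 a ∈ t w, if a ≠ c then (1 : ℝ) else 0 := by
  have hcard : ∀ Y : V → C, (#(unusedColors S Y) : ℝ) =
      ∑ c, ∏ w ∈ S, if Y w ≠ c then (1 : ℝ) else 0 := fun Y => by
    simp only [unusedColors, card_filter, prod_ite_zero, prod_const_one, Nat.cast_sum,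
      Nat.cast_ite, Nat.cast_one, Nat.cast_zero]
  simp only [hcard, expect_sum_comm, Fintype.card_mul_expect]
  exact sum_congr rfl fun c _ => expect_piFinset_prod ht S fun _ a => if a ≠ c then 1 else 0

theorem le_expect_card_unusedColors {S : Finset V} {t : V → Finset C} {δ : ℝ} (hδ : 0 < δ)
    (hne : ∀ w, (t w).Nonempty) (ht : ∀ w ∈ S, δ⁻¹ + 1 ≤ #(t w)) :
    Fintype.card C * (Real.exp (-(#S / Fintype.card C)) - δ / 2) ≤
      𝔼 Y ∈ Fintype.piFinset t, (#(unusedColors S Y) : ℝ) := by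
  rw [expect_card_unusedColors hne]
  cases isEmpty_or_nonempty C
  · simp
  · exact mul_le_mul_of_nonneg_left ((exp_neg_sub_half_le _ hδ.le).trans
      (exp_neg_card_div_card_le_expect_prod hδ ht)) (Nat.cast_nonneg _)

theorem card_filter_piFinset_card_unusedColors_lt_le {S : Finset V} {t : V → Finset C} {δ : ℝ}
    (hδ : 0 < δ) (hne : ∀ w, (t w).Nonempty) (ht : ∀ w ∈ S, δ⁻¹ + 1 ≤ #(t w))
    (hC : 0 < Fintype.card C) (hS : #S ≤ Fintype.card C) :
    (#{Y ∈ Fintype.piFinset t | (#(unusedColors S Y) : ℝ) <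
        Fintype.card C * (Real.exp (-(#S / Fintype.card C)) - δ)} : ℝ) ≤
      Real.exp (-(δ ^ 2 * Fintype.card C / 2)) * #(Fintype.piFinset t) := by
  set k : ℝ := (Fintype.card C : ℝ)
  have hk : 0 < k := Nat.cast_pos.2 hC
  have hmean := le_expect_card_unusedColors hδ hne ht
  have htail := card_filter_piFinset_le_expect_sub_le (J := S) (r := 1) (D := k) (u := k * δ / 2)
    (f := fun Y : V → C => (#(unusedColors S Y) : ℝ)) hne
    (fun X Y hXY => by simp only [dependsOn_unusedColors S hXY])
    (fun w _ X _ c _ => abs_card_unusedColors_update_sub_le S X w c) hk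
    (by simpa using Nat.cast_le.2 hS) (by positivity)
  have hexponent : -2 * (k * δ / 2) ^ 2 / k = -(δ ^ 2 * k / 2) := by
    field_simp
  rw [hexponent] at htail
  refine le_trans ?_ htail
  gcongr with Y _
  intro hY
  linarith

end Occupancy

section ProperColorings

open Finset

theorem card_filter_le_mul_card_of_fiber {α β : Type*} [DecidableEq β] {s : Finset α} (π : α → β)
    (p : α → Prop) [DecidablePred p] {r : ℝ}
    (h : ∀ x ∈ s, (#{y ∈ s | π y = π x ∧ p y} : ℝ) ≤ r * #{y ∈ s | π y = π x}) :
    (#{y ∈ s | p y} : ℝ) ≤ r * #s := by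
  rw [card_eq_sum_card_image π s, card_eq_sum_card_fiberwise (f := π) (t := s.image π)
    fun y hy => mem_image_of_mem π (mem_filter.1 hy).1, Nat.cast_sum, Nat.cast_sum, mul_sum]
  refine sum_le_sum fun b hb => ?_
  obtain ⟨x, hx, rfl⟩ := mem_image.1 hb
  simpa only [filter_filter, and_comm] using h x hx

theorem card_filter_exists_le_sum {α ι : Type*} [Fintype ι] (s : Finset α) (p : ι → α → Prop)
    [∀ i, DecidablePred (p i)] [DecidablePred fun x => ∃ i, p i x] :
    #{x ∈ s | ∃ i, p i x} ≤ ∑ i, #{x ∈ s | p i x} := by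
  classical
  have hcover : {x ∈ s | ∃ i, p i x} ⊆ univ.biUnion fun i => {x ∈ s | p i x} := fun x hx => by
    simpa using hx
  exact (card_le_card hcover).trans card_biUnion_le

variable {V : Type*} [Fintype V] (G : SimpleGraph V) [DecidableRel G.Adj]
  {C : Type*} [DecidableEq C] [Fintype C]

/-- The set `A(X, v)` of colors available at `v`. -/
abbrev availableColors (X : V → C) (v : V) : Finset C := unusedColors (G.neighborFinset v) X

variable {G}

theorem mem_availableColors {X : V → C} {v : V} {c : C} :
    c ∈ availableColors G X v ↔ ∀ w, G.Adj v w → X w ≠ c := by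
  simp [mem_unusedColors]

theorem le_card_availableColors {w : V} {m : ℝ} (hw : G.degree w + m ≤ Fintype.card C)
    (X : V → C) : m ≤ #(availableColors G X w) := by
  have hcard := card_le_card_unusedColors_add_card (G.neighborFinset w) X
  rw [G.card_neighborFinset_eq_degree] at hcard
  rify at hcard
  linarith

variable [DecidableEq V]

variable (G C) in
/-- The proper colorings of `G` with palette `C`, as functions on the vertices; their number is the
denominator of all probabilities. -/
def properColorings : Finset (V → C) := {X | ∀ u v, G.Adj u v → X u ≠ X v}

theorem mem_properColorings {X : V → C} :
    X ∈ properColorings G C ↔ ∀ u v, G.Adj u v → X u ≠ X v := by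
  simp [properColorings]

theorem filter_properColorings_eqOn_compl {S : Finset V} (hS : G.IsIndepSet S) {X : V → C}
    (hX : X ∈ properColorings G C) :
    {Y ∈ properColorings G C | ∀ w ∉ S, Y w = X w} =
      Fintype.piFinset fun w => if w ∈ S then availableColors G X w else {X w} := by
  have hnbr : ∀ {u w}, u ∈ S → G.Adj u w → w ∉ S := fun hu huw hw => hS hu hw huw.ne huw
  ext Y
  rw [mem_filter, mem_properColorings, Fintype.mem_piFinset]
  constructor
  · rintro ⟨hY, hYX⟩ w
    split_ifs with hw
    · refine mem_availableColors.2 fun u hwu => ?_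
      rw [← hYX u (hnbr hw hwu)]
      exact hY u w hwu.symm
    · exact mem_singleton.2 (hYX w hw)
  · intro hY
    have hYX : ∀ w ∉ S, Y w = X w := fun w hw => by
      simpa only [hw, if_false, mem_singleton] using hY w
    have hYA : ∀ u ∈ S, ∀ w, G.Adj u w → Y w ≠ Y u := fun u hu w huw => by
      have hYu : Y u ∈ availableColors G X u := by simpa only [hu, if_true] using hY u
      rw [hYX w (hnbr hu huw)]
      exact mem_availableColors.1 hYu w huw
    refine ⟨fun u w huw => ?_, hYX⟩
    by_cases hu : u ∈ S
    · exact (hYA u hu w huw).symm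
    by_cases hw : w ∈ S
    · exact hYA w hw u huw.symm
    · rw [hYX u hu, hYX w hw]
      exact mem_properColorings.1 hX u w huw

theorem card_filter_availableColors_lt_le {v : V} (hv : G.IsIndepSet (G.neighborFinset v)) {δ : ℝ}
    (hδ : 0 < δ) (hC : 0 < Fintype.card C) (hdeg : G.degree v ≤ Fintype.card C)
    (hnbr : ∀ w, G.Adj v w → G.degree w + (δ⁻¹ + 1) ≤ Fintype.card C) :
    (#{X ∈ properColorings G C | (#(availableColors G X v) : ℝ) <
        Fintype.card C * (Real.exp (-(G.degree v / Fintype.card C)) - δ)} : ℝ) ≤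
      Real.exp (-(δ ^ 2 * Fintype.card C / 2)) * #(properColorings G C) := by
  set S := G.neighborFinset v
  refine card_filter_le_mul_card_of_fiber (fun X (w : {w // w ∉ S}) => X w) _ fun X hX => ?_
  simp only [funext_iff, Subtype.forall, ← filter_filter]
  rw [filter_properColorings_eqOn_compl hv hX, ← G.card_neighborFinset_eq_degree]
  have hlist : ∀ w ∈ S, δ⁻¹ + 1 ≤ (#(availableColors G X w) : ℝ) := fun w hw =>
    le_card_availableColors (hnbr w ((G.mem_neighborFinset v w).1 hw)) X
  refine card_filter_piFinset_card_unusedColors_lt_le hδ (fun w => ?_) (fun w hw => ?_) hC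
    (by rwa [G.card_neighborFinset_eq_degree])
  · split_ifs with hw
    · exact card_pos.1 (by exact_mod_cast (by positivity : 0 < δ⁻¹ + 1).trans_le (hlist w hw))
    · exact singleton_nonempty _
  · rw [if_pos hw]
    exact hlist w hw

theorem stmt_6_general (htriangle : G.CliqueFree 3) {Δ : ℕ} (hΔ : ∀ v, G.degree v ≤ Δ) {β : ℝ}
    (hβ : 0 < β) (hC : Δ + (β⁻¹ + 1) ≤ Fintype.card C) :
    (#{X ∈ properColorings G C | ∃ v, (#(availableColors G X v) : ℝ) <
        Fintype.card C * (Real.exp (-(Δ / Fintype.card C)) - β)} : ℝ) / #(properColorings G C) ≤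
      Fintype.card V * Real.exp (-(β ^ 2 * Fintype.card C / 2)) := by
  have hΔ' : ∀ v, (G.degree v : ℝ) ≤ Δ := fun v => Nat.cast_le.2 (hΔ v)
  have hβinv := inv_pos.2 hβ
  have hCpos : 0 < Fintype.card C := by
    rify
    linarith [Δ.cast_nonneg (α := ℝ)]
  have hvertex : ∀ v, (#{X ∈ properColorings G C | (#(availableColors G X v) : ℝ) <
      Fintype.card C * (Real.exp (-(Δ / Fintype.card C)) - β)} : ℝ) ≤
        Real.exp (-(β ^ 2 * Fintype.card C / 2)) * #(properColorings G C) := fun v => by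
    have hindep : G.IsIndepSet (G.neighborFinset v) := by
      simpa only [G.coe_neighborFinset] using G.isIndepSet_neighborSet_of_triangleFree htriangle v
    refine le_trans ?_ (card_filter_availableColors_lt_le hindep hβ hCpos
      (by rify; linarith [hΔ' v]) fun w _ => by linarith [hΔ' w])
    gcongr
    exact hΔ v
  refine div_le_of_le_mul₀ (by positivity) (by positivity) ?_
  calc _ ≤ ∑ v, (#{X ∈ properColorings G C | (#(availableColors G X v) : ℝ) <
      Fintype.card C * (Real.exp (-(Δ / Fintype.card C)) - β)} : ℝ) := by
        rw [← Nat.cast_sum, Nat.cast_le]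
        exact card_filter_exists_le_sum _ _
    _ ≤ _ := sum_le_card_nsmul _ _ _ fun v _ => hvertex v
    _ = _ := by rw [nsmul_eq_mul, card_univ, mul_assoc]

end ProperColorings

/-- **Local uniformity for random colorings** (Hayes–Vigoda, Lemma 2.1).
For a triangle-free graph with maximum degree `Δ`, `0 < β ≤ 1` and `k ≥ Δ + 2/β`,
a uniformly random proper `k`-coloring `X` satisfies
`Pr(∃ v, |A(X,v)| < k(e^{-Δ/k} - β)) ≤ n e^{-β²k/8}`. -/
theorem stmt_6 {V : Type*} [Fintype V] [DecidableEq V]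
    (G : SimpleGraph V) [DecidableRel G.Adj]
    (n Δ k : ℕ) (hn : Fintype.card V = n)
    (htriangle : G.CliqueFree 3)
    (hΔ : ∀ v, G.degree v ≤ Δ)
    (β : ℝ) (hβ0 : 0 < β) (hβ1 : β ≤ 1)
    (hk : (k : ℝ) ≥ (Δ : ℝ) + 2 / β)
    -- the set of proper k-colorings
    (proper : Finset (V → Fin k))
    (hproper : proper = Finset.univ.filter fun X : V → Fin k =>
      ∀ u v, G.Adj u v → X u ≠ X v)
    -- A(X,v): the set of colors not appearing in the neighborhood of v
    (A : (V → Fin k) → V → Finset (Fin k))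
    (hA : ∀ X v, A X v = Finset.univ.filter fun c => ∀ w ∈ G.neighborFinset v, X w ≠ c) :
    -- probability, under the uniform distribution on proper colorings, of the bad event
    ((proper.filter fun X => ∃ v : V,
        ((A X v).card : ℝ) < (k : ℝ) * (Real.exp (-(Δ : ℝ) / (k : ℝ)) - β)).card : ℝ)
      / (proper.card : ℝ)
      ≤ (n : ℝ) * Real.exp (-β ^ 2 * (k : ℝ) / 8) := by
  subst hproper hn
  obtain rfl : A = availableColors G := by
    ext X v c
    rw [hA, mem_availableColors, Finset.mem_filter_univ]
    simp only [SimpleGraph.mem_neighborFinset]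
  have hβinv : 1 ≤ β⁻¹ := (one_le_inv₀ hβ0).2 hβ1
  have hpalette : (Δ : ℝ) + (β⁻¹ + 1) ≤ Fintype.card (Fin k) := by
    rw [Fintype.card_fin]
    linarith [div_eq_mul_inv 2 β]
  have hbound := stmt_6_general htriangle hΔ hβ0 hpalette
  rw [Fintype.card_fin] at hbound
  simp only [neg_div]
  refine hbound.trans ?_
  gcongr
  nlinarith [mul_nonneg (sq_nonneg β) (Nat.cast_nonneg (α := ℝ) k)]
end

section
/- Let G be a graph on n vertices, let λ > 0, and consider the Glauber dynamics for the hard-core model on G at fugacity λ, with the Hamming metric ρ(X,Y) = |{v : v ∈ X Δ Y}| on independent sets. Let X and Y be independent sets of G and suppose there exists ζ > 0 such that for every vertex v, |U(X,v)| ≤ (1−ζ)(1+λ)/λ and |U(Y,v)| ≤ (1−ζ)(1+λ)/λ. Then the pair (X,Y) is ζ/n distance-decreasing: there is a coupling of one step of the dynamics from X and from Y under which E[ρ(X₁,Y₁)] ≤ (1 − ζ/n)·ρ(X,Y). -/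
/-!
Run the two chains with the same vertex `v` and the same coin. An update that leaves `v` unoccupied
turns the set of disagreements `D = X ∆ Y` into `D.erase v`, and so does an attempt to occupy `v`
which succeeds in both chains or fails in both. If it succeeds only in the chain at `X`, then `v`
may become a disagreement, but it is adjacent to some `w ∈ Y \ X`, and thus `v ∈ U X w`. There are
at most `∑ w ∈ Y \ X, #(U X w)` such `v`, and symmetrically with `X` and `Y` exchanged. So the
uniform choice of `v` removes `#D / n` disagreements on average, and the attempts that succeed in
only one chain create at most `(1 - ζ) * #D / n` new ones.
-/

section CommonRandomness

open Finset

variable {ι α β R : Type*} [Fintype ι] [Fintype α] [Fintype β] [DecidableEq α] [DecidableEq β]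

lemma sum_sum_fiber_mul [NonUnitalNonAssocSemiring R] (w : ι → R) (f : ι → α) (g : ι → β)
    (c : α → β → R) :
    ∑ a, ∑ b, (∑ i with f i = a ∧ g i = b, w i) * c a b = ∑ i, w i * c (f i) (g i) := by
  simp only [sum_mul]
  rw [← sum_fiberwise univ f]
  refine sum_congr rfl fun a _ => ?_
  rw [← sum_fiberwise _ g]
  refine sum_congr rfl fun b _ => ?_
  rw [filter_filter]
  refine sum_congr rfl fun i hi => ?_
  obtain ⟨rfl, rfl⟩ := (mem_filter.1 hi).2
  rfl

theorem exists_coupling_of_common_randomness [NonUnitalNonAssocSemiring R] [PartialOrder R]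
    [IsOrderedAddMonoid R] {w : ι → R} (hw : ∀ i, 0 ≤ w i) (f : ι → α) (g : ι → β) :
    ∃ ν : α → β → R,
      (∀ a b, 0 ≤ ν a b) ∧
      (∀ a, ∑ b, ν a b = ∑ i with f i = a, w i) ∧
      (∀ b, ∑ a, ν a b = ∑ i with g i = b, w i) ∧
      ∀ c : α → β → R, ∑ a, ∑ b, ν a b * c a b = ∑ i, w i * c (f i) (g i) := by
  refine ⟨fun a b => ∑ i with f i = a ∧ g i = b, w i, fun a b => sum_nonneg fun i _ => hw i,
    fun a => ?_, fun b => ?_, sum_sum_fiber_mul w f g⟩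
  · simp only [← filter_filter, sum_fiberwise]
  · simp only [and_comm (a := f _ = _), ← filter_filter, sum_fiberwise]

end CommonRandomness

section FiniteSets

open Finset
open scoped symmDiff

variable {α : Type*} [DecidableEq α]

lemma erase_symmDiff_erase (s t : Finset α) (a : α) : s.erase a ∆ t.erase a = (s ∆ t).erase a := by
  grind [mem_symmDiff]

lemma insert_symmDiff_insert (s t : Finset α) (a : α) :
    insert a s ∆ insert a t = (s ∆ t).erase a := by
  grind [mem_symmDiff]

lemma card_symmDiff (s t : Finset α) : #(s ∆ t) = #(s \ t) + #(t \ s) :=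
  card_union_of_disjoint disjoint_sdiff_sdiff

lemma sum_card_erase_add_card [Fintype α] (D : Finset α) :
    ∑ a, #(D.erase a) + #D = Fintype.card α * #D := by
  have card_erase_add (a : α) : #(D.erase a) + (if a ∈ D then 1 else 0) = #D := by
    split_ifs with ha
    · exact card_erase_add_one ha
    · rw [erase_eq_of_notMem ha, add_zero]
  calc ∑ a, #(D.erase a) + #D = ∑ a, (#(D.erase a) + if a ∈ D then 1 else 0) := by
        simp [sum_add_distrib]
    _ = Fintype.card α * #D := by simp [card_erase_add]

lemma sum_card_filter_mem {β : Type*} [Fintype α] (A : Finset β) (S : β → Finset α) :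
    ∑ a, #{b ∈ A | a ∈ S b} = ∑ b ∈ A, #(S b) := by
  simpa [bipartiteAbove, bipartiteBelow] using
    sum_card_bipartiteAbove_eq_sum_card_bipartiteBelow (s := univ) (t := A) (fun a b => a ∈ S b)

end FiniteSets

namespace HardCore

open Finset
open scoped symmDiff

section StepWeight

variable {V : Type*} [Fintype V]

/-- The law of the randomness driving one step of the Glauber dynamics: a uniform vertex together
with a coin that asks to occupy it with probability `p`, where `p = λ / (1 + λ)` at fugacity `λ`. -/
noncomputable def stepWeight (V : Type*) [Fintype V] (p : ℝ) : V × Bool → ℝ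
  | (_, true) => 1 / Fintype.card V * p
  | (_, false) => 1 / Fintype.card V * (1 - p)

lemma stepWeight_nonneg {p : ℝ} (hp₀ : 0 ≤ p) (hp₁ : p ≤ 1) :
    ∀ i : V × Bool, 0 ≤ stepWeight V p i
  | (_, true) => mul_nonneg (by positivity) hp₀
  | (_, false) => mul_nonneg (by positivity) (sub_nonneg.2 hp₁)

lemma sum_stepWeight_mul (p : ℝ) (φ : V × Bool → ℝ) :
    ∑ i, stepWeight V p i * φ i =
      1 / Fintype.card V * ∑ v, (p * φ (v, true) + (1 - p) * φ (v, false)) := by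
  simp only [Fintype.sum_prod_type, Fintype.sum_bool, stepWeight, mul_sum, mul_add, mul_assoc]

end StepWeight

variable {V : Type*} [DecidableEq V] (G : SimpleGraph V) [DecidableRel G.Adj]

/-- The configuration after an attempt to occupy `v`. A blocked `v` is erased rather than left
alone: on independent sets this makes no difference, and it lets the coupling estimates hold for
arbitrary sets. -/
def occupy (X : Finset V) (v : V) : Finset V :=
  if ∀ u ∈ X, ¬G.Adj v u then insert v X else X.erase v

/-- One step of the Glauber dynamics as a function of the chosen vertex and the coin. -/
def step (X : Finset V) : V × Bool → Finset V
  | (v, true) => occupy G X v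
  | (v, false) => X.erase v

variable {G} in
lemma occupy_eq_of_isIndepSet {X : Finset V} (hX : G.IsIndepSet X) (v : V)
    [Decidable (∀ u ∈ insert v X, ∀ w ∈ insert v X, ¬G.Adj u w)] :
    occupy G X v =
      if ∀ u ∈ insert v X, ∀ w ∈ insert v X, ¬G.Adj u w then insert v X else X := by
  have insert_indep_iff :
      (∀ u ∈ insert v X, ∀ w ∈ insert v X, ¬G.Adj u w) ↔ ∀ u ∈ X, ¬G.Adj v u := by
    refine ⟨fun h u hu => h v (mem_insert_self v X) u (mem_insert_of_mem hu), fun h u hu w hw => ?_⟩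
    rcases mem_insert.1 hu with rfl | huX <;> rcases mem_insert.1 hw with rfl | hwX
    · exact G.irrefl
    · exact h w hwX
    · exact fun huv => h u huX huv.symm
    · exact fun huw => hX huX hwX huw.ne huw
  simp only [insert_indep_iff, occupy]
  split_ifs with hfree
  · rfl
  · exact erase_eq_of_notMem fun hv => hfree fun u hu hvu => hX hv hu hvu.ne hvu

lemma symmDiff_occupy_subset (X Y : Finset V) (v : V) :
    occupy G X v ∆ occupy G Y v ⊆ insert v ((X ∆ Y).erase v) := by
  grind [occupy, mem_symmDiff]

variable {G} in
lemma symmDiff_occupy_of_iff {X Y : Finset V} {v : V}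
    (h : (∀ u ∈ X, ¬G.Adj v u) ↔ ∀ u ∈ Y, ¬G.Adj v u) :
    occupy G X v ∆ occupy G Y v = (X ∆ Y).erase v := by
  simp only [occupy, h]
  split_ifs
  · exact insert_symmDiff_insert X Y v
  · exact erase_symmDiff_erase X Y v

variable [Fintype V]

/-- The paper's `U(X, v)`: the neighbors of `v` none of whose neighbors other than `v` lies
in `X`. -/
def unblockedNeighbors (X : Finset V) (v : V) : Finset V :=
  {w ∈ G.neighborFinset v | ∀ u ∈ (G.neighborFinset w).erase v, u ∉ X}

variable {G} in
lemma exists_mem_sdiff_mem_unblockedNeighbors {X Y : Finset V} {v : V}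
    (hX : ∀ u ∈ X, ¬G.Adj v u) (hY : ¬∀ u ∈ Y, ¬G.Adj v u) :
    ∃ w ∈ Y \ X, v ∈ unblockedNeighbors G X w := by
  push Not at hY
  obtain ⟨w, hwY, hvw⟩ := hY
  refine ⟨w, mem_sdiff.2 ⟨hwY, fun hwX => hX w hwX hvw⟩, ?_⟩
  simp only [unblockedNeighbors, mem_filter, SimpleGraph.mem_neighborFinset, mem_erase]
  exact ⟨hvw.symm, fun u hu huX => hX u huX hu.2⟩

lemma card_symmDiff_occupy_le (X Y : Finset V) (v : V) :
    #(occupy G X v ∆ occupy G Y v) ≤ #((X ∆ Y).erase v) +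
      (#{w ∈ Y \ X | v ∈ unblockedNeighbors G X w} +
        #{w ∈ X \ Y | v ∈ unblockedNeighbors G Y w}) := by
  have hle : #(occupy G X v ∆ occupy G Y v) ≤ #((X ∆ Y).erase v) + 1 :=
    (card_le_card (symmDiff_occupy_subset G X Y v)).trans (card_insert_le _ _)
  have one_le {X Y : Finset V} (hX : ∀ u ∈ X, ¬G.Adj v u) (hY : ¬∀ u ∈ Y, ¬G.Adj v u) :
      1 ≤ #{w ∈ Y \ X | v ∈ unblockedNeighbors G X w} :=
    card_pos.2 (filter_nonempty_iff.2 (exists_mem_sdiff_mem_unblockedNeighbors hX hY))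
  by_cases hX : ∀ u ∈ X, ¬G.Adj v u <;> by_cases hY : ∀ u ∈ Y, ¬G.Adj v u
  · rw [symmDiff_occupy_of_iff (iff_of_true hX hY)]
    exact Nat.le_add_right _ _
  · have := one_le hX hY
    lia
  · have := one_le hY hX
    lia
  · rw [symmDiff_occupy_of_iff (iff_of_false hX hY)]
    exact Nat.le_add_right _ _

lemma sum_card_symmDiff_occupy_le (X Y : Finset V) :
    ∑ v, #(occupy G X v ∆ occupy G Y v) ≤ ∑ v, #((X ∆ Y).erase v) +
      (∑ w ∈ Y \ X, #(unblockedNeighbors G X w) + ∑ w ∈ X \ Y, #(unblockedNeighbors G Y w)) :=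
  calc ∑ v, #(occupy G X v ∆ occupy G Y v)
      ≤ ∑ v, (#((X ∆ Y).erase v) + (#{w ∈ Y \ X | v ∈ unblockedNeighbors G X w} +
          #{w ∈ X \ Y | v ∈ unblockedNeighbors G Y w})) :=
        sum_le_sum fun v _ => card_symmDiff_occupy_le G X Y v
    _ = _ := by simp only [sum_add_distrib, sum_card_filter_mem]

lemma sum_stepWeight_of_step_eq (p : ℝ) (X A : Finset V) :
    ∑ i with step G X i = A, stepWeight V p i = 1 / Fintype.card V * ∑ v,
      (p * (if A = occupy G X v then 1 else 0) + (1 - p) * (if A = X.erase v then 1 else 0)) := by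
  rw [sum_filter]
  simpa only [mul_ite, mul_one, mul_zero, step, eq_comm] using
    sum_stepWeight_mul p fun i => if step G X i = A then 1 else 0

variable {G} {X Y : Finset V} {p ζ : ℝ}

lemma sum_occupy_erase_card_symmDiff_le (hp : 0 ≤ p)
    (hX : ∀ w ∈ Y \ X, p * #(unblockedNeighbors G X w) ≤ 1 - ζ)
    (hY : ∀ w ∈ X \ Y, p * #(unblockedNeighbors G Y w) ≤ 1 - ζ) :
    ∑ v, (p * #(occupy G X v ∆ occupy G Y v) + (1 - p) * #(X.erase v ∆ Y.erase v)) ≤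
      (Fintype.card V - ζ) * #(X ∆ Y) := by
  have erased : ∑ v, (#((X ∆ Y).erase v) : ℝ) + #(X ∆ Y) = Fintype.card V * #(X ∆ Y) :=
    mod_cast sum_card_erase_add_card (X ∆ Y)
  have occupied : p * ∑ v, (#(occupy G X v ∆ occupy G Y v) : ℝ) ≤
      p * (∑ v, (#((X ∆ Y).erase v) : ℝ) + (∑ w ∈ Y \ X, (#(unblockedNeighbors G X w) : ℝ) +
        ∑ w ∈ X \ Y, (#(unblockedNeighbors G Y w) : ℝ))) :=
    mul_le_mul_of_nonneg_left (mod_cast sum_card_symmDiff_occupy_le G X Y) hp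
  have createdX : p * ∑ w ∈ Y \ X, (#(unblockedNeighbors G X w) : ℝ) ≤ #(Y \ X) * (1 - ζ) := by
    simpa only [mul_sum, nsmul_eq_mul] using sum_le_card_nsmul _ _ _ hX
  have createdY : p * ∑ w ∈ X \ Y, (#(unblockedNeighbors G Y w) : ℝ) ≤ #(X \ Y) * (1 - ζ) := by
    simpa only [mul_sum, nsmul_eq_mul] using sum_le_card_nsmul _ _ _ hY
  have card_eq : (#(X ∆ Y) : ℝ) = #(X \ Y) + #(Y \ X) := mod_cast card_symmDiff X Y
  simp only [erase_symmDiff_erase, sum_add_distrib, ← mul_sum]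
  calc _ ≤ ∑ v, (#((X ∆ Y).erase v) : ℝ) + (1 - ζ) * #(X ∆ Y) := by
        rw [card_eq]
        linarith
    _ = (Fintype.card V - ζ) * #(X ∆ Y) := by linear_combination erased

theorem expected_card_symmDiff_step_le (hp : 0 ≤ p)
    (hX : ∀ w ∈ Y \ X, p * #(unblockedNeighbors G X w) ≤ 1 - ζ)
    (hY : ∀ w ∈ X \ Y, p * #(unblockedNeighbors G Y w) ≤ 1 - ζ) :
    ∑ i, stepWeight V p i * #(step G X i ∆ step G Y i) ≤
      (1 - ζ / Fintype.card V) * #(X ∆ Y) := by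
  rw [sum_stepWeight_mul p fun i => (#(step G X i ∆ step G Y i) : ℝ)]
  rcases isEmpty_or_nonempty V
  · simp [eq_empty_of_isEmpty]
  calc _ ≤ 1 / Fintype.card V * ((Fintype.card V - ζ) * #(X ∆ Y) : ℝ) :=
        mul_le_mul_of_nonneg_left (sum_occupy_erase_card_symmDiff_le hp hX hY) (by positivity)
    _ = (1 - ζ / Fintype.card V) * #(X ∆ Y) := by field_simp

end HardCore

/-- **Contraction for the hard-core Glauber dynamics** (Hayes–Vigoda, Lemma 4.8).
If independent sets `X`, `Y` satisfy `|U(X,v)|, |U(Y,v)| ≤ (1-ζ)(1+λ)/λ` for all `v`,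
then there is a coupling of one step of the hard-core Glauber dynamics from `X` and
from `Y` under which the expected Hamming distance is at most `(1 - ζ/n)·ρ(X,Y)`. -/
theorem stmt_9 {V : Type*} [Fintype V] [DecidableEq V]
    (G : SimpleGraph V) [DecidableRel G.Adj]
    (n : ℕ) (hn : Fintype.card V = n)
    (lam : ℝ) (hlam : 0 < lam)
    -- U(X,v): the neighbors of v unblocked in X \ {v}
    (U : Finset V → V → Finset V)
    (hU : ∀ (X : Finset V) (v : V), U X v = (G.neighborFinset v).filter
      fun w => ∀ u ∈ (G.neighborFinset w).erase v, u ∉ X)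
    -- the Glauber transition kernel for the hard-core model at fugacity lam
    (P : Finset V → Finset V → ℝ)
    (hP : ∀ X Y : Finset V, P X Y = (1 / (n : ℝ)) * ∑ v : V,
      ((lam / (1 + lam)) *
        (if Y = (if ∀ u ∈ insert v X, ∀ w ∈ insert v X, ¬ G.Adj u w
                 then insert v X else X) then 1 else 0)
       + (1 / (1 + lam)) * (if Y = X.erase v then 1 else 0)))
    -- the Hamming metric (size of the symmetric difference)
    (ρ : Finset V → Finset V → ℕ)
    (hρ : ∀ X Y : Finset V, ρ X Y = ((X \ Y) ∪ (Y \ X)).card)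
    -- the pair of independent sets
    (X Y : Finset V)
    (hX : ∀ u ∈ X, ∀ v ∈ X, ¬ G.Adj u v)
    (hY : ∀ u ∈ Y, ∀ v ∈ Y, ¬ G.Adj u v)
    (ζ : ℝ) (hζ : 0 < ζ)
    (hUX : ∀ v : V, ((U X v).card : ℝ) ≤ (1 - ζ) * (1 + lam) / lam)
    (hUY : ∀ v : V, ((U Y v).card : ℝ) ≤ (1 - ζ) * (1 + lam) / lam) :
    ∃ ν : Finset V → Finset V → ℝ,
      (∀ a b, 0 ≤ ν a b) ∧
      (∀ a, ∑ b, ν a b = P X a) ∧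
      (∀ b, ∑ a, ν a b = P Y b) ∧
      (∑ a, ∑ b, ν a b * (ρ a b : ℝ)) ≤ (1 - ζ / (n : ℝ)) * (ρ X Y : ℝ) := by
  subst hn
  obtain rfl : U = HardCore.unblockedNeighbors G := funext₂ hU
  have fail_prob : 1 - lam / (1 + lam) = 1 / (1 + lam) := by
    field_simp
    ring
  have kernel {Z : Finset V} (hZ : ∀ u ∈ Z, ∀ v ∈ Z, ¬G.Adj u v) (A : Finset V) :
      ∑ i with HardCore.step G Z i = A, HardCore.stepWeight V (lam / (1 + lam)) i = P Z A := by
    have hZ' : G.IsIndepSet Z := fun u hu v hv _ => hZ u hu v hv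
    simp only [HardCore.sum_stepWeight_of_step_eq, fail_prob,
      HardCore.occupy_eq_of_isIndepSet hZ', hP]
  have unblocked_le {k : ℝ} (hk : k ≤ (1 - ζ) * (1 + lam) / lam) :
      lam / (1 + lam) * k ≤ 1 - ζ := by
    rw [le_div_iff₀ hlam] at hk
    rw [div_mul_eq_mul_div, div_le_iff₀ (by positivity)]
    linarith
  obtain ⟨ν, hν, hνX, hνY, hνρ⟩ := exists_coupling_of_common_randomness
    (HardCore.stepWeight_nonneg (V := V) (p := lam / (1 + lam)) (by positivity)
      (div_le_one_of_le₀ (by linarith) (by positivity)))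
    (HardCore.step G X) (HardCore.step G Y)
  refine ⟨ν, hν, fun a => (hνX a).trans (kernel hX a), fun b => (hνY b).trans (kernel hY b), ?_⟩
  rw [hνρ fun a b => (ρ a b : ℝ)]
  simp only [hρ]
  exact HardCore.expected_card_symmDiff_step_le (by positivity)
    (fun w _ => unblocked_le (hUX w)) fun w _ => unblocked_le (hUY w)
end

section
/- Let ζ > 0 and 1 ≤ C ≤ (1−ζ)e, and let ξ > 0. Let g(x) = exp(−Cx), let μ be the unique fixed point of g, and set θ = ξζ/(8C). Define h on closed intervals by h(I) = {g(x) + y : x ∈ I, |y| ≤ θ}, and let t = ⌈(4/ζ)·ln(1 + 1/ξ)⌉. Then h^t([0,1]) ⊆ [μ − ξ, μ + ξ], where h^t denotes the t-fold iterate of h. -/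
/-! The map `g x = exp (-C x)` need not contract, but `g ∘ g` does: its derivative at `x` is
`C * (u * exp (-u))` with `u = C * g x`, which is at most `C / e ≤ 1 - ζ`. Two perturbed steps
therefore send the ball of radius `r` about `μ` into the ball of radius `(1 - ζ) * r + 3 * C * θ`,
because an error of `θ` before an application of `g` becomes at most `2 * C * θ` after it. The
errors accumulate to at most `3 * C * θ / ζ = 3 * ξ / 8`, and `t / 2` double steps shrink the
initial radius to at most `ξ / 2`. The bound on the error needs `C * θ ≤ 1` and fails when `ξ * ζ`
is large, but then `t ≤ 1`. -/

open Function Metric Real Set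

section PerturbedImage

variable {X : Type*} [PseudoMetricSpace X]

/-- The set of all possible values of `f` on `s` when `f` is evaluated with an error of at most `θ`.
For `f x = exp (-C x)` on the real line it is the interval map `h`. -/
def perturbedImage (f : X → X) (θ : ℝ) (s : Set X) : Set X :=
  {z | ∃ x ∈ s, dist z (f x) ≤ θ}

variable {f : X → X} {s : Set X} {μ : X} {θ δ q r R c : ℝ}

theorem monotone_perturbedImage (f : X → X) (θ : ℝ) : Monotone (perturbedImage f θ) :=
  fun _ _ hst _ ⟨x, hx, hz⟩ ↦ ⟨x, hst hx, hz⟩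

theorem perturbedImage_subset_closedBall (hf : MapsTo f s (closedBall μ R)) :
    perturbedImage f θ s ⊆ closedBall μ (R + θ) := by
  rintro z ⟨x, hx, hz⟩
  have hfx : dist (f x) μ ≤ R := hf hx
  exact mem_closedBall.2 (by linarith [dist_triangle z (f x) μ])

theorem iterate_perturbedImage_subset_closedBall_of_le_one (hθ : 0 ≤ θ) (hf : MapsTo f s s)
    (hs : s ⊆ closedBall μ R) {k : ℕ} (hk : k ≤ 1) :
    (perturbedImage f θ)^[k] s ⊆ closedBall μ (R + θ) := by
  interval_cases k
  · exact hs.trans (closedBall_subset_closedBall (by linarith))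
  · exact perturbedImage_subset_closedBall (hf.mono_right hs)

theorem iterate_two_perturbedImage_closedBall_subset (hq : 0 ≤ q)
    (hcontr : ∀ x, dist (f (f x)) μ ≤ q * dist x μ)
    (herr : ∀ x y, dist y (f x) ≤ θ → dist (f y) (f (f x)) ≤ δ) :
    (perturbedImage f θ)^[2] (closedBall μ r) ⊆ closedBall μ (δ + q * r + θ) := by
  refine perturbedImage_subset_closedBall ?_
  rintro y ⟨x, hx, hy⟩
  calc dist (f y) μ ≤ dist (f y) (f (f x)) + dist (f (f x)) μ := dist_triangle _ _ _
    _ ≤ δ + q * dist x μ := add_le_add (herr x y hy) (hcontr x)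
    _ ≤ δ + q * r := by gcongr; exact hx

theorem iterate_subset_closedBall_of_affine_bound {F : Set X → Set X} (hF : Monotone F)
    (hstep : ∀ r, F (closedBall μ r) ⊆ closedBall μ (q * r + (1 - q) * c))
    (hs : s ⊆ closedBall μ (R + c)) (m : ℕ) :
    F^[m] s ⊆ closedBall μ (q ^ m * R + c) := by
  induction m with
  | zero => simpa using hs
  | succ m ih =>
    have hradius : q * (q ^ m * R + c) + (1 - q) * c = q ^ (m + 1) * R + c := by ring
    rw [iterate_succ_apply', ← hradius]
    exact (hF ih).trans (hstep _)

end PerturbedImage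

section ExpDecay

/-- The map `g x = exp (-C x)`, whose perturbed iterates are studied. -/
noncomputable def expDecay (C x : ℝ) : ℝ := exp (-(C * x))

variable {C x y μ θ q r : ℝ}

theorem expDecay_pos (C x : ℝ) : 0 < expDecay C x := exp_pos _

theorem expDecay_le_one (hC : 0 ≤ C) (hx : 0 ≤ x) : expDecay C x ≤ 1 :=
  exp_le_one_iff.2 (neg_nonpos.2 (mul_nonneg hC hx))

theorem mapsTo_expDecay_Icc (hC : 0 ≤ C) : MapsTo (expDecay C) (Icc 0 1) (Icc 0 1) :=
  fun x hx ↦ ⟨(expDecay_pos C x).le, expDecay_le_one hC hx.1⟩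

theorem mem_Icc_of_isFixedPt_expDecay (hC : 0 ≤ C) (hμ : IsFixedPt (expDecay C) μ) :
    μ ∈ Icc (0 : ℝ) 1 := by
  have hμ_nonneg : 0 ≤ μ := hμ ▸ (expDecay_pos C μ).le
  exact ⟨hμ_nonneg, hμ.eq.ge.trans (expDecay_le_one hC hμ_nonneg)⟩

theorem hasDerivAt_expDecay (C x : ℝ) : HasDerivAt (expDecay C) (-(C * expDecay C x)) x := by
  have hexp := (((hasDerivAt_id x).const_mul C).neg).exp
  rw [mul_one, mul_neg, mul_comm] at hexp
  exact hexp

theorem dist_expDecay_expDecay_le (hC : 0 ≤ C) (x y : ℝ) :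
    dist (expDecay C (expDecay C x)) (expDecay C (expDecay C y)) ≤ C * exp (-1) * dist x y := by
  have hderiv (z : ℝ) := (hasDerivAt_expDecay C (expDecay C z)).comp z (hasDerivAt_expDecay C z)
  refine convex_univ.norm_image_sub_le_of_norm_hasDerivWithin_le
    (fun z _ ↦ (hderiv z).hasDerivWithinAt) (fun z _ ↦ ?_) (mem_univ y) (mem_univ x)
  have hz := expDecay_pos C z
  have hzz := expDecay_pos C (expDecay C z)
  calc ‖-(C * expDecay C (expDecay C z)) * -(C * expDecay C z)‖
      = C * (C * expDecay C z * expDecay C (expDecay C z)) := by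
        rw [neg_mul_neg, norm_of_nonneg (by positivity)]
        ring
    _ ≤ C * exp (-1) := by gcongr; exact mul_exp_neg_le_exp_neg_one _

theorem dist_expDecay_le (hC : 0 ≤ C) (hx : 0 ≤ x) (hxy : C * dist y x ≤ 1) :
    dist (expDecay C y) (expDecay C x) ≤ 2 * (C * dist y x) := by
  have habs : |-(C * (y - x))| = C * dist y x := by
    rw [abs_neg, abs_mul, abs_of_nonneg hC, Real.dist_eq]
  have hfactor : expDecay C y - expDecay C x = expDecay C x * (exp (-(C * (y - x))) - 1) := by
    rw [expDecay, expDecay, mul_sub_one, ← exp_add]; ring_nf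
  calc dist (expDecay C y) (expDecay C x)
      = expDecay C x * |exp (-(C * (y - x))) - 1| := by
        rw [Real.dist_eq, hfactor, abs_mul, abs_of_pos (expDecay_pos C x)]
    _ ≤ 1 * (2 * |-(C * (y - x))|) := by
        gcongr
        · exact expDecay_le_one hC hx
        · exact abs_exp_sub_one_le (habs ▸ hxy)
    _ = 2 * (C * dist y x) := by rw [one_mul, habs]

theorem iterate_two_perturbedImage_expDecay_closedBall_subset (hC : 0 ≤ C)
    (hq : C * exp (-1) ≤ q) (hμ : IsFixedPt (expDecay C) μ) (hθ : C * θ ≤ 1) :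
    (perturbedImage (expDecay C) θ)^[2] (closedBall μ r) ⊆
      closedBall μ (2 * (C * θ) + q * r + θ) := by
  refine iterate_two_perturbedImage_closedBall_subset ((by positivity : 0 ≤ C * exp (-1)).trans hq)
    (fun x ↦ ?_) (fun x y hy ↦ ?_)
  · calc dist (expDecay C (expDecay C x)) μ
        = dist (expDecay C (expDecay C x)) (expDecay C (expDecay C μ)) := by rw [hμ.eq, hμ.eq]
      _ ≤ C * exp (-1) * dist x μ := dist_expDecay_expDecay_le hC x μ
      _ ≤ q * dist x μ := by gcongr
  · have hCy : C * dist y (expDecay C x) ≤ C * θ := by gcongr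
    linarith [dist_expDecay_le hC (expDecay_pos C x).le (hCy.trans hθ)]

theorem iterate_perturbedImage_expDecay_Icc_subset_of_le_one (hC : 0 ≤ C)
    (hμ : IsFixedPt (expDecay C) μ) (hθ : 0 ≤ θ) {k : ℕ} (hk : k ≤ 1) :
    (perturbedImage (expDecay C) θ)^[k] (Icc 0 1) ⊆ closedBall μ (1 + θ) :=
  iterate_perturbedImage_subset_closedBall_of_le_one hθ (mapsTo_expDecay_Icc hC)
    (fun _ hx ↦ dist_le_of_mem_Icc_01 hx (mem_Icc_of_isFixedPt_expDecay hC hμ)) hk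

theorem iterate_perturbedImage_expDecay_Icc_subset {ζ c : ℝ} (hC : 1 ≤ C)
    (hζ : C * exp (-1) ≤ 1 - ζ) (hμ : IsFixedPt (expDecay C) μ) (hθ : 0 ≤ θ) (hCθ : C * θ ≤ 1)
    (hθc : θ ≤ c) (hc : 3 * (C * θ) ≤ ζ * c) (t : ℕ) :
    (perturbedImage (expDecay C) θ)^[t] (Icc 0 1) ⊆ closedBall μ ((1 - ζ) ^ (t / 2) + c) := by
  have hθC : θ ≤ C * θ := le_mul_of_one_le_left hθ hC
  have hstep (r : ℝ) : (perturbedImage (expDecay C) θ)^[2] (closedBall μ r) ⊆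
      closedBall μ ((1 - ζ) * r + (1 - (1 - ζ)) * c) :=
    (iterate_two_perturbedImage_expDecay_closedBall_subset (by linarith) hζ hμ hCθ).trans
      (closedBall_subset_closedBall (by linarith))
  have hstart : (perturbedImage (expDecay C) θ)^[t % 2] (Icc 0 1) ⊆ closedBall μ (1 + c) :=
    (iterate_perturbedImage_expDecay_Icc_subset_of_le_one (by linarith) hμ hθ (by lia)).trans
      (closedBall_subset_closedBall (by linarith))
  have hiterate := iterate_subset_closedBall_of_affine_bound
    ((monotone_perturbedImage _ _).iterate 2) hstep hstart (t / 2)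
  rwa [← iterate_mul, ← iterate_add_apply, Nat.div_add_mod, mul_one] at hiterate

end ExpDecay

section NumberOfSteps

variable {ζ ξ : ℝ}

theorem exp_neg_two_mul_log_one_add_inv_le (hξ : 0 < ξ) :
    exp (-(2 * log (1 + 1 / ξ))) ≤ ξ / 4 := by
  have hexp : exp (2 * log (1 + 1 / ξ)) = (1 + 1 / ξ) ^ 2 := by
    rw [mul_comm, exp_mul, exp_log (by positivity), rpow_two]
  have ham_gm : 4 * (1 / ξ) ≤ (1 + 1 / ξ) ^ 2 := by linarith [sq_nonneg (1 - 1 / ξ)]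
  rw [exp_neg, hexp]
  exact (inv_anti₀ (by positivity) ham_gm).trans_eq (by field_simp)

theorem one_sub_pow_le_half (hζ : 0 < ζ) (hζ_one : ζ ≤ 1) (hξ : 0 < ξ) {m : ℕ}
    (hm : 4 / ζ * log (1 + 1 / ξ) ≤ 2 * m + 1) : (1 - ζ) ^ m ≤ ξ / 2 := by
  have hlog : 4 * log (1 + 1 / ξ) ≤ ζ * (2 * m + 1) := by
    rwa [div_mul_eq_mul_div, div_le_iff₀' hζ] at hm
  have hexp_half : exp (1 / 2) ≤ 2 :=
    (le_log_iff_exp_le two_pos).1 (by linarith [log_two_gt_d9])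
  calc (1 - ζ) ^ m ≤ exp (-ζ) ^ m := by gcongr; exact one_sub_le_exp_neg ζ
    _ = exp (-(m * ζ)) := by rw [← exp_nat_mul, mul_neg]
    _ ≤ exp (1 / 2 + -(2 * log (1 + 1 / ξ))) := by gcongr; linarith
    _ ≤ 2 * (ξ / 4) := by
        rw [exp_add]; gcongr; exact exp_neg_two_mul_log_one_add_inv_le hξ
    _ = ξ / 2 := by ring

theorem four_div_mul_log_one_add_inv_le_one (hζ : 0 < ζ) (hξ : 0 < ξ) (hξζ : 4 ≤ ξ * ζ) :
    4 / ζ * log (1 + 1 / ξ) ≤ 1 := by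
  calc 4 / ζ * log (1 + 1 / ξ) ≤ 4 / ζ * (1 / ξ) := by
        gcongr; linarith [log_le_sub_one_of_pos (x := 1 + 1 / ξ) (by positivity)]
    _ = 4 / (ξ * ζ) := by field_simp
    _ ≤ 1 := div_le_one_of_le₀ hξζ (by positivity)

end NumberOfSteps

/-- **Convergence of the perturbed iterated map** (Hayes–Vigoda, Lemma 4.6).
Let `1 ≤ C ≤ (1-ζ)e`, `ξ > 0`, `g(x) = exp(-Cx)` with fixed point `μ`, and
`θ = ξζ/(8C)`. Let `h(I) = g(I) ± θ` and `t = ⌈(4/ζ)·ln(1 + 1/ξ)⌉. Then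
`h^t([0,1]) ⊆ μ ± ξ`. -/
theorem stmt_11 (ζ C ξ μ θ : ℝ)
    (hζ : 0 < ζ)
    (hC1 : 1 ≤ C) (hC2 : C ≤ (1 - ζ) * Real.exp 1)
    (hξ : 0 < ξ)
    (hμ : μ = Real.exp (-(C * μ)))
    (hθ : θ = ξ * ζ / (8 * C))
    -- the interval map h : I ↦ g(I) ± θ, where g(x) = exp(-Cx)
    (h : Set ℝ → Set ℝ)
    (hh : h = fun I => {z : ℝ | ∃ x ∈ I, |z - Real.exp (-(C * x))| ≤ θ})
    (t : ℕ) (ht : t = ⌈(4 / ζ) * Real.log (1 + 1 / ξ)⌉₊) :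
    h^[t] (Set.Icc (0 : ℝ) 1) ⊆ Set.Icc (μ - ξ) (μ + ξ) := by
  have hC : 0 < C := by linarith
  have hfix : IsFixedPt (expDecay C) μ := hμ.symm
  have hcontr : C * exp (-1) ≤ 1 - ζ := by
    rwa [exp_neg, ← div_eq_mul_inv, div_le_iff₀ (exp_pos 1)]
  have hζ_one : ζ ≤ 1 := by linarith [mul_pos hC (exp_pos (-1))]
  have hθ_nonneg : 0 ≤ θ := by rw [hθ]; positivity
  have hCθ : C * θ = ξ * ζ / 8 := by rw [hθ]; field_simp
  have hξζ_le : ξ * ζ ≤ ξ := mul_le_of_le_one_right hξ.le hζ_one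
  have hθξ : θ ≤ ξ / 8 := by linarith [le_mul_of_one_le_left hθ_nonneg hC1]
  rw [show h = perturbedImage (expDecay C) θ from hh, ← Real.closedBall_eq_Icc]
  obtain hξζ | hξζ := le_total 4 (ξ * ζ)
  · have ht_one : t ≤ 1 := by
      rw [ht, Nat.ceil_le, Nat.cast_one]
      exact four_div_mul_log_one_add_inv_le_one hζ hξ hξζ
    exact (iterate_perturbedImage_expDecay_Icc_subset_of_le_one hC.le hfix hθ_nonneg ht_one).trans
      (closedBall_subset_closedBall (by linarith))
  · have hm : 4 / ζ * log (1 + 1 / ξ) ≤ 2 * (t / 2 : ℕ) + 1 :=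
      (Nat.ceil_le.1 ht.ge).trans (by exact_mod_cast (by lia : t ≤ 2 * (t / 2) + 1))
    refine (iterate_perturbedImage_expDecay_Icc_subset (c := 3 * ξ / 8) hC1 hcontr hfix hθ_nonneg
      (by linarith) (by linarith) (by linarith) t).trans (closedBall_subset_closedBall ?_)
    linarith [one_sub_pow_le_half hζ hζ_one hξ hm]
end

section
/- Let ζ ∈ (0,1), let C = (1−ζ)e, and let μ be the unique real number satisfying μ = exp(−Cμ). Then μ < (1−ζ/2)/C. -/
theorem mul_sq_le_exp_neg_one_of_eq_exp_neg_mul {C μ : ℝ} (hμ : μ = Real.exp (-(C * μ))) :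
    C * μ ^ 2 ≤ Real.exp (-1) :=
  calc
    C * μ ^ 2 = C * μ * μ := by ring
    _ = C * μ * Real.exp (-(C * μ)) := congrArg (C * μ * ·) hμ
    _ ≤ Real.exp (-1) := Real.mul_exp_neg_le_exp_neg_one (C * μ)

theorem stmt_12_general {ζ C μ : ℝ} (hζ : ζ ≠ 0) (hζ1 : ζ < 1)
    (hC : C = (1 - ζ) * Real.exp 1) (hμ : μ = Real.exp (-(C * μ))) :
    μ < (1 - ζ / 2) / C := by
  have hC_pos : 0 < C := hC ▸ mul_pos (sub_pos.mpr hζ1) (Real.exp_pos 1)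
  have hsq : (C * μ) ^ 2 < (1 - ζ / 2) ^ 2 :=
    calc
      (C * μ) ^ 2 = C * (C * μ ^ 2) := by ring
      _ ≤ C * Real.exp (-1) := by
        gcongr
        exact mul_sq_le_exp_neg_one_of_eq_exp_neg_mul hμ
      _ = 1 - ζ := by rw [hC, Real.exp_neg, mul_inv_cancel_right₀ (Real.exp_ne_zero 1)]
      _ < (1 - ζ / 2) ^ 2 := by linarith [sq_pos_of_ne_zero hζ]
  rw [lt_div_iff₀' hC_pos]
  exact lt_of_pow_lt_pow_left₀ 2 (by linarith) hsq

/-- **Observation 4.5** (Hayes–Vigoda). Let `ζ ∈ (0,1)`, `C = (1-ζ)e`, and let `μ`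
satisfy `μ = exp(-Cμ)`. Then `μ < (1 - ζ/2)/C`. -/
theorem stmt_12 (ζ C μ : ℝ)
    (hζ0 : 0 < ζ) (hζ1 : ζ < 1)
    (hC : C = (1 - ζ) * Real.exp 1)
    (hμ : μ = Real.exp (-(C * μ))) :
    μ < (1 - ζ / 2) / C :=
  stmt_12_general hζ0.ne' hζ1 hC hμ
end

section
/- Let ζ, ξ ∈ (0,1], let 1 ≤ C ≤ (1−ζ)e, let μ be the unique real number satisfying μ = exp(−Cμ), and set θ = ξζ/(8C). Then for every x with ξ/2 ≤ x ≤ 1, both of the following inequalities hold: (i) μx + θ ≤ x(1 − ζ/4)/C, and (ii) μ(e^x − 1) + θ ≤ −ln(1 − x(1 − ζ/4))/C. -/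
/-!
Put `a = 1 - ζ / 4`. Multiplying `μ = exp (-Cμ)` by `C exp (Cμ)` gives `Cμ exp (Cμ) = C`, and
`e t ≤ exp t` then yields `(Cμ)² ≤ 1 - ζ`, hence `Cμ ≤ 1 - ζ / 2 = 2a - 1`. This settles (i). For
(ii), subtract the linear terms: it remains to see
`(2a - 1) (exp x - 1 - x) ≤ -log (1 - ax) - ax`, which holds term by term in the power series at
`0`, because `2a - 1 ≤ (n - 1)! aⁿ` for `n ≥ 2`.
-/

open Real
open scoped Nat

theorem mul_le_one_sub_half_of_eq_exp_neg {ζ C μ : ℝ} (hC : 0 ≤ C) (hCζ : C ≤ (1 - ζ) * exp 1)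
    (hμ : μ = exp (-(C * μ))) : C * μ ≤ 1 - ζ / 2 := by
  have hμ_pos : 0 < μ := hμ ▸ exp_pos _
  have hfix : μ * exp (C * μ) = 1 := by
    nth_rw 1 [hμ]
    rw [← exp_add, neg_add_cancel, exp_zero]
  have hsq : (C * μ) ^ 2 ≤ 1 - ζ := by
    refine le_of_mul_le_mul_right ?_ (exp_pos 1)
    calc (C * μ) ^ 2 * exp 1 = C * μ * (exp 1 * (C * μ)) := by ring
      _ ≤ C * μ * exp (C * μ) := by gcongr; exact exp_one_mul_le_exp
      _ = C := by rw [mul_assoc, hfix, mul_one]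
      _ ≤ (1 - ζ) * exp 1 := hCζ
  linarith [two_mul_le_add_sq (C * μ) 1]

theorem two_mul_sub_one_le_factorial_mul_pow {a : ℝ} (ha : 0 ≤ a) (n : ℕ) :
    2 * a - 1 ≤ (n + 1)! * a ^ (n + 2) := by
  rcases le_total (2 * a) 1 with ha_half | ha_half
  · exact (sub_nonpos.2 ha_half).trans (by positivity)
  · induction n with
    | zero =>
      norm_num
      linarith [two_mul_le_add_sq a 1]
    | succ n ih =>
      have hratio : 1 ≤ (n + 2) * a := by nlinarith [n.cast_nonneg (α := ℝ)]
      calc 2 * a - 1 ≤ (n + 1)! * a ^ (n + 2) := ih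
        _ ≤ (n + 2) * a * ((n + 1)! * a ^ (n + 2)) := le_mul_of_one_le_left (by positivity) hratio
        _ = (n + 1 + 1)! * a ^ (n + 1 + 2) := by
          rw [Nat.factorial_succ (n + 1)]; push_cast; ring

theorem hasSum_exp_sub_one_sub_self (x : ℝ) :
    HasSum (fun n : ℕ ↦ x ^ (n + 2) / (n + 2)!) (exp x - 1 - x) := by
  have hexp : HasSum (fun n : ℕ ↦ x ^ n / n !) (exp x) := by
    rw [exp_eq_exp_ℝ]
    exact NormedSpace.expSeries_div_hasSum_exp x
  simpa [Finset.sum_range_succ, sub_sub] using (hasSum_nat_add_iff' 2).2 hexp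

theorem hasSum_neg_log_one_sub_sub_self {y : ℝ} (hy : |y| < 1) :
    HasSum (fun n : ℕ ↦ y ^ (n + 2) / (n + 2)) (-log (1 - y) - y) := by
  have hlog := (hasSum_nat_add_iff' 1).2 (hasSum_pow_div_log_of_abs_lt_one hy)
  simpa [add_assoc, one_add_one_eq_two] using hlog

theorem two_mul_sub_one_mul_exp_sub_le_neg_log_sub {a x : ℝ} (ha : 0 ≤ a) (hx : 0 ≤ x)
    (hxa : x * a < 1) : (2 * a - 1) * (exp x - 1 - x) ≤ -log (1 - x * a) - x * a := by
  have habs : |x * a| < 1 := by rwa [abs_of_nonneg (by positivity)]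
  refine hasSum_le (fun n ↦ ?_) ((hasSum_exp_sub_one_sub_self x).mul_left (2 * a - 1))
    (hasSum_neg_log_one_sub_sub_self habs)
  calc (2 * a - 1) * (x ^ (n + 2) / (n + 2)!)
      ≤ (n + 1)! * a ^ (n + 2) * (x ^ (n + 2) / (n + 2)!) := by
        gcongr
        exact two_mul_sub_one_le_factorial_mul_pow ha n
    _ = (x * a) ^ (n + 2) / (n + 2) := by
        rw [Nat.factorial_succ (n + 1)]
        push_cast
        field_simp
        ring

theorem stmt_19_general {ζ C μ θ x : ℝ} (hC : 0 < C) (hCζ : C ≤ (1 - ζ) * exp 1)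
    (hμ : μ = exp (-(C * μ))) (hx : 0 ≤ x) (hxζ : x * (1 - ζ / 4) < 1)
    (hθ : θ ≤ x * ζ / (4 * C)) :
    μ * x + θ ≤ x * (1 - ζ / 4) / C ∧
      μ * (exp x - 1) + θ ≤ -log (1 - x * (1 - ζ / 4)) / C := by
  have hCμ : C * μ ≤ 1 - ζ / 2 := mul_le_one_sub_half_of_eq_exp_neg hC.le hCζ hμ
  have hCθ : θ * C ≤ x * ζ / 4 := by rwa [← le_div_iff₀ hC, div_div]
  have hζ : ζ < 1 := sub_pos.1 (pos_of_mul_pos_left (hC.trans_le hCζ) (exp_pos 1).le)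
  constructor <;> rw [le_div_iff₀ hC]
  · linarith [mul_le_mul_of_nonneg_right hCμ hx]
  · have hexp : C * μ * (exp x - 1) ≤ (1 - ζ / 2) * (exp x - 1) := by
      gcongr
      linarith [one_le_exp hx]
    have hlog :=
      two_mul_sub_one_mul_exp_sub_le_neg_log_sub (a := 1 - ζ / 4) (by linarith) hx hxζ
    linarith

/-- **The two key inequalities in the proof of Lemma 4.6** (Hayes–Vigoda).
Let `ζ, ξ ∈ (0,1]`, `1 ≤ C ≤ (1-ζ)e`, let `μ` satisfy `μ = exp(-Cμ)`, and set
`θ = ξζ/(8C)`. Then for every `x ∈ [ξ/2, 1]`: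
(i) `μx + θ ≤ x(1 - ζ/4)/C`, and (ii) `μ(e^x - 1) + θ ≤ -ln(1 - x(1 - ζ/4))/C`. -/
theorem stmt_19 (ζ ξ C μ θ : ℝ)
    (hζ0 : 0 < ζ) (hζ1 : ζ ≤ 1)
    (hξ0 : 0 < ξ) (hξ1 : ξ ≤ 1)
    (hC1 : 1 ≤ C) (hC2 : C ≤ (1 - ζ) * Real.exp 1)
    (hμ : μ = Real.exp (-(C * μ)))
    (hθ : θ = ξ * ζ / (8 * C)) :
    ∀ x : ℝ, ξ / 2 ≤ x → x ≤ 1 →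
      μ * x + θ ≤ x * (1 - ζ / 4) / C ∧
      μ * (Real.exp x - 1) + θ ≤ -Real.log (1 - x * (1 - ζ / 4)) / C := by
  have hC : 0 < C := by linarith
  have hθξ : θ = ξ / 2 * ζ / (4 * C) := by rw [hθ]; ring
  exact fun x hξx hx1 ↦
    stmt_19_general hC hC2 hμ (by linarith) (by nlinarith) (by rw [hθξ]; gcongr)
end
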